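/- arXiv:2405.09367 — 3 statements merged into one kernel-verified Lean document; each statement's English description precedes it below -/
import Mathlib

section
/- Assume the WENO weight and reconstruction setup in the jump setting, with additionally: l ≤ r−1 (so that every clean substencil lies to the right of z), c* > 0, κ := Σ_{i=l+1}^{R−1} 1/Π_{j≠i}(c_i − c_j) ≠ 0, and 2s ≥ r+1. Then the WENO reconstruction is essentially non-oscillatory with the expected reduced order: there exist C > 0 and h₀ > 0 such that for every ε with 0 < ε ≤ 1 and every 0 < h < h₀, |q_{R,h}(x*_h) − f(z + c*·h)| ≤ C·(h^{r+1} + ε). -/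
/-- Simple smoothness indicator `I_{R,i,h}` on the nonuniform stencil `x_{i,h} = z + cᵢ h`,
with `r = ⌊(R-1)/2⌋`. -/
noncomputable def wenoI (R : ℕ) (c : ℕ → ℝ) (z : ℝ) (f : ℝ → ℝ) (i : ℕ) (h : ℝ) : ℝ :=
  ∑ j ∈ Finset.Ico i (i + (R - 1) / 2),
    ((f (z + c (j + 1) * h) - f (z + c j * h)) / (c (j + 1) - c j)) ^ 2

/-- Squared undivided difference `d_{R,h}` of `f` on the full stencil. -/
noncomputable def wenoD (R : ℕ) (c : ℕ → ℝ) (z : ℝ) (f : ℝ → ℝ) (h : ℝ) : ℝ :=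
  (((R - 1).factorial : ℝ) *
      ∑ i ∈ Finset.range R,
        f (z + c i * h) / ∏ j ∈ (Finset.range R).erase i, (c i - c j)) ^ 2

/-- Unnormalized WENO weight `α_{R,i,h}`, with `r' = ⌈(R-1)/2⌉ = R/2` (ℕ-division). -/
noncomputable def wenoAlpha (R : ℕ) (c : ℕ → ℝ) (z : ℝ) (f : ℝ → ℝ) (s : ℕ) (ε : ℝ)
    (i : ℕ) (h : ℝ) : ℝ :=
  (1 / (((R / 2 : ℕ) : ℝ) + 1)) *
    (1 + (wenoD R c z f h) ^ s / ((wenoI R c z f i h) ^ s + ε))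

/-- Normalized WENO weight `ω_{R,i,h}`. -/
noncomputable def wenoOmega (R : ℕ) (c : ℕ → ℝ) (z : ℝ) (f : ℝ → ℝ) (s : ℕ) (ε : ℝ)
    (i : ℕ) (h : ℝ) : ℝ :=
  wenoAlpha R c z f s ε i h / ∑ j ∈ Finset.range (R / 2 + 1), wenoAlpha R c z f s ε j h

/-- Global average weight `ω_{R,h}`. -/
noncomputable def wenoOmegaG (R : ℕ) (c : ℕ → ℝ) (z : ℝ) (f : ℝ → ℝ) (s : ℕ) (ε : ℝ)
    (h : ℝ) : ℝ :=
  1 / (1 + (wenoD R c z f h) ^ s *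
        ∑ i ∈ Finset.range (R / 2 + 1), 1 / ((wenoI R c z f i h) ^ s + ε))


/-- Lagrange reconstruction value `p_{R,i,h}(x*_h)` of the `i`-th substencil, evaluated at
`x*_h = z + c* h`, with `r = ⌊(R-1)/2⌋`. -/
noncomputable def wenoP (R : ℕ) (c : ℕ → ℝ) (z cstar : ℝ) (f : ℝ → ℝ) (i : ℕ) (h : ℝ) : ℝ :=
  ∑ j ∈ Finset.Icc i (i + (R - 1) / 2),
    (∏ l ∈ (Finset.Icc i (i + (R - 1) / 2)).erase j, (cstar - c l) / (c j - c l)) *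
      f (z + c j * h)

/-- Lagrange reconstruction value `p_{R,h}(x*_h)` of the full stencil. -/
noncomputable def wenoPfull (R : ℕ) (c : ℕ → ℝ) (z cstar : ℝ) (f : ℝ → ℝ) (h : ℝ) : ℝ :=
  ∑ j ∈ Finset.range R,
    (∏ l ∈ (Finset.range R).erase j, (cstar - c l) / (c j - c l)) * f (z + c j * h)

/-- The WENO reconstruction `q_{R,h}(x*_h)`. -/
noncomputable def wenoQ (R : ℕ) (c : ℕ → ℝ) (z cstar : ℝ) (f : ℝ → ℝ) (s : ℕ) (ε h : ℝ) : ℝ :=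
  wenoOmegaG R c z f s ε h * wenoPfull R c z cstar f h +
    (1 - wenoOmegaG R c z f s ε h) *
      ∑ i ∈ Finset.range (R / 2 + 1), wenoOmega R c z f s ε i h * wenoP R c z cstar f i h

/-!
The quantity `d_{R,h}` converges as `h → 0⁺` to a positive multiple of `(κ · (f_R(z) - f_L(z)))²`,
because a divided difference annihilates constants. The indicator of a substencil crossing the jump
also has a positive limit, while on the rightmost substencil, which is clean, `I^s = O(h^{2s})`
and hence `I^s = O(h^{r+1})`. That substencil alone makes the normalizing denominators at least
of order `1 / (h^{r+1} + ε)`, so the global weight and the weights of all crossing substencils are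
`O(h^{r+1} + ε)`; they multiply interpolation errors that are merely bounded. The remaining
substencils see smooth data only, and interpolate it with error `O(h^{r+1})`.
-/

open Filter Set Asymptotics
open scoped Polynomial Topology Nat

section Interpolation

variable {F ι : Type*} [Field F] [DecidableEq ι] {S : Finset ι} {v : ι → F}

lemma eval_interpolate_eq_sum (S : Finset ι) (v y : ι → F) (x : F) :
    (Lagrange.interpolate S v y).eval x =
      ∑ i ∈ S, (∏ j ∈ S.erase i, (x - v j) / (v i - v j)) * y i := by
  rw [Lagrange.interpolate_apply, Polynomial.eval_finsetSum]
  refine Finset.sum_congr rfl fun i _ => ?_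
  simp only [Lagrange.basis, Lagrange.basisDivisor, Polynomial.eval_mul, Polynomial.eval_C,
    Polynomial.eval_prod, Polynomial.eval_sub, Polynomial.eval_X, div_eq_inv_mul]
  exact mul_comm _ _

lemma eval_interpolate_eval_mul (hv : InjOn v S) {p : F[X]} (hp : p.natDegree < S.card)
    (x t : F) :
    (Lagrange.interpolate S v fun i => p.eval (t * v i)).eval x = p.eval (t * x) := by
  let q : F[X] := p.comp (Polynomial.C t * Polynomial.X)
  have hq (y : F) : q.eval y = p.eval (t * y) := by simp [q]
  have hq_degree : q.degree < S.card :=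
    Polynomial.degree_le_natDegree.trans_lt <| Nat.cast_lt.2 <| calc
      q.natDegree ≤ p.natDegree * (Polynomial.C t * Polynomial.X).natDegree :=
        Polynomial.natDegree_comp_le
      _ ≤ p.natDegree * 1 := by
        gcongr
        exact (Polynomial.natDegree_C_mul_le _ _).trans Polynomial.natDegree_X_le
      _ < S.card := by rwa [mul_one]
  simp only [← hq]
  rw [← Lagrange.eq_interpolate hv hq_degree]

/-
The divided difference of a constant vanishes, so that of a two-valued function only sees
the height of the step.
-/
lemma sum_ite_div_prod_sub (hv : InjOn v S) (hS : 1 < S.card) (P : ι → Prop) [DecidablePred P]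
    (a b : F) :
    ∑ i ∈ S, (if P i then a else b) / ∏ j ∈ S.erase i, (v i - v j) =
      (b - a) * ∑ i ∈ S with ¬ P i, 1 / ∏ j ∈ S.erase i, (v i - v j) := by
  have hconst : ∑ i ∈ S, a / ∏ j ∈ S.erase i, (v i - v j) = 0 := by
    have hdeg : (Polynomial.C a).degree < S.card :=
      Polynomial.degree_C_le.trans_lt (by exact_mod_cast zero_lt_one.trans hS)
    have hcoeff := Lagrange.coeff_eq_sum hv hdeg
    rw [Polynomial.coeff_C_of_ne_zero (by omega)] at hcoeff
    simpa only [Polynomial.eval_C] using hcoeff.symm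
  rw [← sub_zero (∑ i ∈ S, _), ← hconst, ← Finset.sum_sub_distrib, Finset.sum_filter,
    Finset.mul_sum]
  refine Finset.sum_congr rfl fun i _ => ?_
  split_ifs <;> grind

end Interpolation

lemma isBigO_eval_interpolate {α ι E 𝕜 : Type*} [DecidableEq ι] [Norm E] [NormedField 𝕜]
    {L : Filter α} {S : Finset ι} {v : ι → 𝕜} {x : 𝕜} {y : α → ι → 𝕜} {g : α → E}
    (hy : ∀ i ∈ S, (fun t => y t i) =O[L] g) :
    (fun t => (Lagrange.interpolate S v (y t)).eval x) =O[L] g := by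
  simp only [eval_interpolate_eq_sum]
  exact IsBigO.fun_sum fun i hi => (hy i hi).const_mul_left _

section OneSided

variable {ι : Type*} [DecidableEq ι] {S : Finset ι} {v : ι → ℝ} {f : ℝ → ℝ} {z x : ℝ} {n : ℕ}

lemma exists_polynomial_sub_isBigO_nhdsGE (hf : ContDiffWithinAt ℝ (n + 1) f (Ici z) z) :
    ∃ p : ℝ[X], p.natDegree ≤ n ∧
      (fun x => f x - p.eval (x - z)) =O[𝓝[≥] z] fun x => (x - z) ^ (n + 1) := by
  obtain ⟨u, hu, -, hfu⟩ := hf.contDiffOn le_rfl (by simp)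
  rw [insert_eq_of_mem self_mem_Ici] at hu
  obtain ⟨b, hzb, hbu⟩ := mem_nhdsGE_iff_exists_Icc_subset.1 hu
  obtain ⟨K, hK⟩ := exists_taylor_mean_remainder_bound hzb.le (hfu.mono hbu)
  let p : ℝ[X] := ∑ k ∈ Finset.range (n + 1),
    Polynomial.monomial k ((k ! : ℝ)⁻¹ * iteratedDerivWithin k f (Icc z b) z)
  have hp (x : ℝ) : taylorWithinEval f n (Icc z b) z x = p.eval (x - z) := by
    simp only [p, taylor_within_apply, Polynomial.eval_finsetSum, Polynomial.eval_monomial,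
      smul_eq_mul, mul_right_comm]
  refine ⟨p, Polynomial.natDegree_sum_le_of_forall_le _ _ fun k hk => ?_, IsBigO.of_bound K ?_⟩
  · exact (Polynomial.natDegree_monomial_le _).trans (Finset.mem_range_succ_iff.1 hk)
  · filter_upwards [Icc_mem_nhdsGE hzb] with x hx
    rw [← hp, Real.norm_of_nonneg (pow_nonneg (sub_nonneg.2 hx.1) _)]
    exact hK x hx

lemma tendsto_add_mul_nhds (z x : ℝ) : Tendsto (fun h => z + x * h) (𝓝[>] 0) (𝓝 z) := by
  have hcont : Continuous fun h : ℝ => z + x * h := by fun_prop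
  simpa using (hcont.tendsto 0).mono_left nhdsWithin_le_nhds

lemma tendsto_add_mul_nhdsGE (z : ℝ) (hx : 0 ≤ x) :
    Tendsto (fun h => z + x * h) (𝓝[>] 0) (𝓝[≥] z) := by
  refine tendsto_nhdsWithin_iff.2 ⟨tendsto_add_mul_nhds z x, ?_⟩
  filter_upwards [self_mem_nhdsWithin] with h hh
  exact le_add_of_nonneg_right (mul_nonneg hx (mem_Ioi.1 hh).le)

lemma tendsto_add_mul_nhdsLT (z : ℝ) (hx : x < 0) :
    Tendsto (fun h => z + x * h) (𝓝[>] 0) (𝓝[<] z) := by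
  refine tendsto_nhdsWithin_iff.2 ⟨tendsto_add_mul_nhds z x, ?_⟩
  filter_upwards [self_mem_nhdsWithin] with h hh
  exact add_lt_of_neg_right z (mul_neg_of_neg_of_pos hx hh)

lemma tendsto_sample {a : ℝ} (hleft : Tendsto f (𝓝[<] z) (𝓝 a))
    (hright : ContinuousWithinAt f (Ici z) z) (x : ℝ) :
    Tendsto (fun h => f (z + x * h)) (𝓝[>] 0) (𝓝 (if x < 0 then a else f z)) := by
  split_ifs with hx
  · exact hleft.comp (tendsto_add_mul_nhdsLT z hx)
  · exact hright.tendsto.comp (tendsto_add_mul_nhdsGE z (not_lt.1 hx))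

lemma eval_interpolate_sub_isBigO (hv : InjOn v S) (hnonneg : ∀ i ∈ S, 0 ≤ v i) (hx : 0 ≤ x)
    (hf : ContDiffWithinAt ℝ (n + 1) f (Ici z) z) (hn : n < S.card) :
    (fun h => (Lagrange.interpolate S v fun i => f (z + v i * h)).eval x - f (z + x * h))
      =O[𝓝[>] 0] fun h => h ^ (n + 1) := by
  obtain ⟨p, hp, hfp⟩ := exists_polynomial_sub_isBigO_nhdsGE hf
  have hsample {y : ℝ} (hy : 0 ≤ y) :
      (fun h => f (z + y * h) - p.eval (y * h)) =O[𝓝[>] 0] fun h => h ^ (n + 1) := by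
    have hcomp := hfp.comp_tendsto (tendsto_add_mul_nhdsGE z hy)
    simp only [Function.comp_def, add_sub_cancel_left, mul_pow] at hcomp
    exact hcomp.trans (isBigO_const_mul_self _ _ _)
  have hremainder := isBigO_eval_interpolate (S := S) (v := v) (x := x)
    (y := fun h i => f (z + v i * h) - p.eval (v i * h)) fun i hi => hsample (hnonneg i hi)
  refine (hremainder.sub (hsample hx)).congr_left fun h => ?_
  have hlinear : (Lagrange.interpolate S v fun i => f (z + v i * h) - p.eval (v i * h)) =
      (Lagrange.interpolate S v fun i => f (z + v i * h)) -
        Lagrange.interpolate S v fun i => p.eval (v i * h) :=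
    map_sub (Lagrange.interpolate S v) _ _
  rw [hlinear, Polynomial.eval_sub]
  simp only [mul_comm _ h]
  rw [eval_interpolate_eval_mul hv (hp.trans_lt hn)]
  ring

end OneSided

section Weights

variable {R s i k : ℕ} {c : ℕ → ℝ} {z cstar ε h : ℝ} {f : ℝ → ℝ}

lemma wenoP_eq_eval_interpolate (R : ℕ) (c : ℕ → ℝ) (z cstar : ℝ) (f : ℝ → ℝ) (i : ℕ) (h : ℝ) :
    wenoP R c z cstar f i h =
      (Lagrange.interpolate (Finset.Icc i (i + (R - 1) / 2)) c
        fun j => f (z + c j * h)).eval cstar :=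
  (eval_interpolate_eq_sum _ _ _ _).symm

lemma wenoPfull_eq_eval_interpolate (R : ℕ) (c : ℕ → ℝ) (z cstar : ℝ) (f : ℝ → ℝ) (h : ℝ) :
    wenoPfull R c z cstar f h =
      (Lagrange.interpolate (Finset.range R) c fun j => f (z + c j * h)).eval cstar :=
  (eval_interpolate_eq_sum _ _ _ _).symm

lemma wenoI_nonneg (R : ℕ) (c : ℕ → ℝ) (z : ℝ) (f : ℝ → ℝ) (i : ℕ) (h : ℝ) :
    0 ≤ wenoI R c z f i h :=
  Finset.sum_nonneg fun _ _ => sq_nonneg _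

lemma wenoD_nonneg (R : ℕ) (c : ℕ → ℝ) (z : ℝ) (f : ℝ → ℝ) (h : ℝ) : 0 ≤ wenoD R c z f h :=
  sq_nonneg _

lemma wenoI_pow_add_pos (hε : 0 < ε) (s i : ℕ) : 0 < wenoI R c z f i h ^ s + ε :=
  add_pos_of_nonneg_of_pos (pow_nonneg (wenoI_nonneg ..) s) hε

lemma wenoAlpha_pos (hε : 0 < ε) (i : ℕ) : 0 < wenoAlpha R c z f s ε i h := by
  have hI : 0 < wenoI R c z f i h ^ s + ε := wenoI_pow_add_pos hε s i
  have hD := wenoD_nonneg R c z f h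
  unfold wenoAlpha
  positivity

lemma sum_wenoAlpha_pos (hε : 0 < ε) :
    0 < ∑ j ∈ Finset.range (R / 2 + 1), wenoAlpha R c z f s ε j h :=
  Finset.sum_pos (fun _ _ => wenoAlpha_pos hε _) ⟨0, by simp⟩

lemma wenoAlpha_le_sum (hε : 0 < ε) (hk : k ∈ Finset.range (R / 2 + 1)) :
    wenoAlpha R c z f s ε k h ≤ ∑ j ∈ Finset.range (R / 2 + 1), wenoAlpha R c z f s ε j h :=
  Finset.single_le_sum (f := fun j => wenoAlpha R c z f s ε j h)
    (fun _ _ => (wenoAlpha_pos hε _).le) hk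

lemma wenoOmega_nonneg (hε : 0 < ε) (i : ℕ) : 0 ≤ wenoOmega R c z f s ε i h :=
  div_nonneg (wenoAlpha_pos hε i).le (sum_wenoAlpha_pos hε).le

lemma wenoOmega_le_one (hε : 0 < ε) (hi : i ∈ Finset.range (R / 2 + 1)) :
    wenoOmega R c z f s ε i h ≤ 1 :=
  div_le_one_of_le₀ (wenoAlpha_le_sum hε hi) (sum_wenoAlpha_pos hε).le

lemma sum_wenoOmega (hε : 0 < ε) :
    ∑ i ∈ Finset.range (R / 2 + 1), wenoOmega R c z f s ε i h = 1 := by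
  simp only [wenoOmega]
  rw [← Finset.sum_div, div_self (sum_wenoAlpha_pos hε).ne']

lemma wenoOmega_le (hε : 0 < ε) (hk : k ∈ Finset.range (R / 2 + 1))
    (hI : 0 < wenoI R c z f i h ^ s) (hD : 0 < wenoD R c z f h ^ s) :
    wenoOmega R c z f s ε i h ≤
      (1 + wenoD R c z f h ^ s / wenoI R c z f i h ^ s) *
        ((wenoI R c z f k h ^ s + ε) / wenoD R c z f h ^ s) := by
  have hIk : 0 < wenoI R c z f k h ^ s + ε := wenoI_pow_add_pos hε s k
  have hnum : wenoAlpha R c z f s ε i h ≤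
      1 / (((R / 2 : ℕ) : ℝ) + 1) * (1 + wenoD R c z f h ^ s / wenoI R c z f i h ^ s) := by
    unfold wenoAlpha
    gcongr
    exact le_add_of_nonneg_right hε.le
  have hden : 1 / (((R / 2 : ℕ) : ℝ) + 1) *
      (wenoD R c z f h ^ s / (wenoI R c z f k h ^ s + ε)) ≤
        ∑ j ∈ Finset.range (R / 2 + 1), wenoAlpha R c z f s ε j h := by
    refine le_trans ?_ (wenoAlpha_le_sum hε hk)
    unfold wenoAlpha
    gcongr
    exact le_add_of_nonneg_left zero_le_one
  refine (div_le_div₀ (by positivity) hnum (by positivity) hden).trans_eq ?_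
  field_simp

lemma wenoOmegaG_denom_ge (hε : 0 < ε) (hk : k ∈ Finset.range (R / 2 + 1)) :
    1 + wenoD R c z f h ^ s / (wenoI R c z f k h ^ s + ε) ≤
      1 + wenoD R c z f h ^ s *
        ∑ i ∈ Finset.range (R / 2 + 1), 1 / (wenoI R c z f i h ^ s + ε) := by
  rw [← mul_one_div]
  have hD := wenoD_nonneg R c z f h
  gcongr
  exact Finset.single_le_sum (f := fun i => 1 / (wenoI R c z f i h ^ s + ε))
    (fun i _ => (one_div_pos.2 (wenoI_pow_add_pos hε s i)).le) hk

lemma wenoOmegaG_mem_Icc (hε : 0 < ε) : wenoOmegaG R c z f s ε h ∈ Icc (0 : ℝ) 1 := by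
  have hdenom : 1 ≤ 1 + wenoD R c z f h ^ s *
      ∑ i ∈ Finset.range (R / 2 + 1), 1 / (wenoI R c z f i h ^ s + ε) := by
    have hD := wenoD_nonneg R c z f h
    have hI (i : ℕ) : 0 < wenoI R c z f i h ^ s + ε := wenoI_pow_add_pos hε s i
    exact le_add_of_nonneg_right
      (mul_nonneg (pow_nonneg hD s) (Finset.sum_nonneg fun i _ => (one_div_pos.2 (hI i)).le))
  exact ⟨by unfold wenoOmegaG; positivity, div_le_one_of_le₀ hdenom (by positivity)⟩

lemma wenoOmegaG_le (hε : 0 < ε) (hk : k ∈ Finset.range (R / 2 + 1))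
    (hD : 0 < wenoD R c z f h ^ s) :
    wenoOmegaG R c z f s ε h ≤ (wenoI R c z f k h ^ s + ε) / wenoD R c z f h ^ s := by
  have hIk : 0 < wenoI R c z f k h ^ s + ε := wenoI_pow_add_pos hε s k
  have hdenom := (le_add_of_nonneg_left zero_le_one).trans
    (wenoOmegaG_denom_ge (c := c) (z := z) (f := f) (s := s) (h := h) hε hk)
  rw [← one_div_div]
  exact one_div_le_one_div_of_le (by positivity) hdenom

lemma wenoQ_sub (hε : 0 < ε) (y : ℝ) :
    wenoQ R c z cstar f s ε h - y =
      wenoOmegaG R c z f s ε h * (wenoPfull R c z cstar f h - y) +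
        (1 - wenoOmegaG R c z f s ε h) * ∑ i ∈ Finset.range (R / 2 + 1),
          wenoOmega R c z f s ε i h * (wenoP R c z cstar f i h - y) := by
  simp only [wenoQ, mul_sub, Finset.sum_sub_distrib]
  rw [← Finset.sum_mul, sum_wenoOmega hε]
  ring

end Weights

section Indicators

variable {R i l : ℕ} {c : ℕ → ℝ} {z a : ℝ} {f : ℝ → ℝ}

lemma exists_pos_tendsto_wenoD (hc : InjOn c (Finset.range R)) (hR : 1 < R)
    (hleft : Tendsto f (𝓝[<] z) (𝓝 a)) (hright : ContinuousWithinAt f (Ici z) z)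
    (hjump : a ≠ f z)
    (hκ : ∑ i ∈ Finset.range R with ¬ c i < 0,
      1 / ∏ j ∈ (Finset.range R).erase i, (c i - c j) ≠ 0) :
    ∃ D > 0, Tendsto (wenoD R c z f) (𝓝[>] 0) (𝓝 D) := by
  have hlim : Tendsto (wenoD R c z f) (𝓝[>] 0) (𝓝 ((((R - 1)! : ℝ) *
      ∑ i ∈ Finset.range R, (if c i < 0 then a else f z) /
        ∏ j ∈ (Finset.range R).erase i, (c i - c j)) ^ 2)) :=
    ((tendsto_finsetSum _ fun i _ =>
      (tendsto_sample hleft hright (c i)).div_const _).const_mul _).pow 2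
  rw [sum_ite_div_prod_sub hc (by rwa [Finset.card_range])] at hlim
  refine ⟨_, sq_pos_of_ne_zero ?_, hlim⟩
  exact mul_ne_zero (mod_cast (R - 1).factorial_ne_zero)
    (mul_ne_zero (sub_ne_zero.2 hjump.symm) hκ)

lemma exists_pos_tendsto_wenoI (hleft : Tendsto f (𝓝[<] z) (𝓝 a))
    (hright : ContinuousWithinAt f (Ici z) z) (hjump : a ≠ f z)
    (hl : l ∈ Finset.Ico i (i + (R - 1) / 2)) (hcl : c l < 0) (hcl' : 0 ≤ c (l + 1)) :
    ∃ I > 0, Tendsto (wenoI R c z f i) (𝓝[>] 0) (𝓝 I) := by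
  refine ⟨_, ?_, tendsto_finsetSum _ fun j _ => (((tendsto_sample hleft hright (c (j + 1))).sub
    (tendsto_sample hleft hright (c j))).div_const _).pow 2⟩
  refine Finset.sum_pos' (fun _ _ => sq_nonneg _) ⟨l, hl, sq_pos_of_ne_zero ?_⟩
  rw [if_neg hcl'.not_gt, if_pos hcl]
  exact div_ne_zero (sub_ne_zero.2 hjump.symm) (by linarith)

lemma wenoI_isBigO_sq (hc : ∀ j ∈ Finset.Icc i (i + (R - 1) / 2), 0 ≤ c j)
    (hf : DifferentiableWithinAt ℝ f (Ici z) z) :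
    wenoI R c z f i =O[𝓝[>] 0] fun h => h ^ 2 := by
  have hsample {x : ℝ} (hx : 0 ≤ x) : (fun h => f (z + x * h) - f z) =O[𝓝[>] 0] fun h => h := by
    have hcomp := hf.isBigO_sub.comp_tendsto (tendsto_add_mul_nhdsGE z hx)
    simp only [Function.comp_def, add_sub_cancel_left] at hcomp
    exact hcomp.trans (isBigO_const_mul_self _ _ _)
  refine IsBigO.fun_sum fun j hj => IsBigO.pow ?_ 2
  have hj := Finset.mem_Ico.1 hj
  have hdiff := (hsample (hc (j + 1) (Finset.mem_Icc.2 (by omega)))).sub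
    (hsample (hc j (Finset.mem_Icc.2 (by omega))))
  simp only [sub_sub_sub_cancel_right] at hdiff
  simpa only [div_eq_inv_mul] using hdiff.const_mul_left _

end Indicators

/-- The regime `h → 0⁺` uniformly in the regularization parameter `ε > 0`, as a filter on the
pairs `(h, ε)`. -/
def uniformGridLimit : Filter (ℝ × ℝ) := 𝓝[>] 0 ×ˢ 𝓟 (Ioi 0)

section UniformGridLimit

lemma tendsto_fst_uniformGridLimit : Tendsto Prod.fst uniformGridLimit (𝓝[>] 0) :=
  tendsto_fst

lemma eventually_snd_pos : ∀ᶠ p in uniformGridLimit, 0 < p.2 :=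
  tendsto_snd.eventually (mem_principal_self (Ioi (0 : ℝ)))

lemma eventually_fst_pos : ∀ᶠ p in uniformGridLimit, 0 < p.1 :=
  tendsto_fst_uniformGridLimit.eventually self_mem_nhdsWithin

lemma exists_bound_of_isBigO_uniformGridLimit {u w : ℝ × ℝ → ℝ}
    (huw : u =O[uniformGridLimit] w) :
    ∃ C > 0, ∃ h₀ > 0, ∀ ε, 0 < ε → ∀ h, 0 < h → h < h₀ → |u (h, ε)| ≤ C * |w (h, ε)| := by
  obtain ⟨C, hC, hbound⟩ := huw.exists_pos
  obtain ⟨h₀, hh₀, hsub⟩ := mem_nhdsGT_iff_exists_Ioo_subset.1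
    (eventually_prod_principal_iff.1 hbound.bound)
  exact ⟨C, hC, h₀, hh₀, fun ε hε h hpos hlt => hsub ⟨hpos, hlt⟩ ε hε⟩

lemma fst_pow_isBigO_add (m : ℕ) :
    (fun p : ℝ × ℝ => p.1 ^ m) =O[uniformGridLimit] fun p => p.1 ^ m + p.2 := by
  refine IsBigO.of_bound' ?_
  filter_upwards [eventually_fst_pos, eventually_snd_pos] with p hh hε
  rw [Real.norm_of_nonneg (by positivity), Real.norm_of_nonneg (by positivity)]
  exact le_add_of_nonneg_right hε.le

lemma snd_isBigO_add (m : ℕ) :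
    (fun p : ℝ × ℝ => p.2) =O[uniformGridLimit] fun p => p.1 ^ m + p.2 := by
  refine IsBigO.of_bound' ?_
  filter_upwards [eventually_fst_pos, eventually_snd_pos] with p hh hε
  rw [Real.norm_of_nonneg hε.le, Real.norm_of_nonneg (by positivity)]
  exact le_add_of_nonneg_left (by positivity)

variable {R s i k m : ℕ} {c : ℕ → ℝ} {z D I : ℝ} {f : ℝ → ℝ}

lemma indicator_add_div_isBigO (hD : Tendsto (wenoD R c z f) (𝓝[>] 0) (𝓝 D)) (hDpos : 0 < D)
    (hk : (fun h => wenoI R c z f k h ^ s) =O[𝓝[>] 0] fun h => h ^ m) :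
    (fun p : ℝ × ℝ => (wenoI R c z f k p.1 ^ s + p.2) / wenoD R c z f p.1 ^ s)
      =O[uniformGridLimit] fun p => p.1 ^ m + p.2 := by
  have hnum : (fun p : ℝ × ℝ => wenoI R c z f k p.1 ^ s + p.2)
      =O[uniformGridLimit] fun p => p.1 ^ m + p.2 :=
    ((hk.comp_tendsto tendsto_fst_uniformGridLimit).trans (fst_pow_isBigO_add m)).add
      (snd_isBigO_add m)
  have hinv : (fun p : ℝ × ℝ => (wenoD R c z f p.1 ^ s)⁻¹) =O[uniformGridLimit]
      fun _ => (1 : ℝ) :=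
    (((hD.pow s).inv₀ (by positivity)).comp tendsto_fst_uniformGridLimit).isBigO_one ℝ
  simpa only [mul_one, div_eq_mul_inv] using hnum.mul hinv

lemma eventually_wenoD_pow_pos (hD : Tendsto (wenoD R c z f) (𝓝[>] 0) (𝓝 D)) (hDpos : 0 < D)
    (s : ℕ) : ∀ᶠ p in uniformGridLimit, 0 < wenoD R c z f p.1 ^ s :=
  ((hD.comp tendsto_fst_uniformGridLimit).eventually_const_lt hDpos).mono fun _ hp => pow_pos hp s

lemma wenoOmegaG_isBigO (hD : Tendsto (wenoD R c z f) (𝓝[>] 0) (𝓝 D)) (hDpos : 0 < D)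
    (hkR : k ∈ Finset.range (R / 2 + 1))
    (hk : (fun h => wenoI R c z f k h ^ s) =O[𝓝[>] 0] fun h => h ^ m) :
    (fun p : ℝ × ℝ => wenoOmegaG R c z f s p.2 p.1) =O[uniformGridLimit]
      fun p => p.1 ^ m + p.2 := by
  refine IsBigO.trans (IsBigO.of_bound' ?_) (indicator_add_div_isBigO hD hDpos hk)
  filter_upwards [eventually_snd_pos, eventually_wenoD_pow_pos hD hDpos s] with p hε hDp
  rw [Real.norm_of_nonneg (wenoOmegaG_mem_Icc hε).1]
  exact (wenoOmegaG_le hε hkR hDp).trans (Real.le_norm_self _)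

lemma wenoOmega_isBigO_of_tendsto_wenoI_pos (hD : Tendsto (wenoD R c z f) (𝓝[>] 0) (𝓝 D))
    (hDpos : 0 < D) (hI : Tendsto (wenoI R c z f i) (𝓝[>] 0) (𝓝 I)) (hIpos : 0 < I)
    (hkR : k ∈ Finset.range (R / 2 + 1))
    (hk : (fun h => wenoI R c z f k h ^ s) =O[𝓝[>] 0] fun h => h ^ m) :
    (fun p : ℝ × ℝ => wenoOmega R c z f s p.2 i p.1) =O[uniformGridLimit]
      fun p => p.1 ^ m + p.2 := by
  have hratio : (fun p : ℝ × ℝ => 1 + wenoD R c z f p.1 ^ s / wenoI R c z f i p.1 ^ s)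
      =O[uniformGridLimit] fun _ => (1 : ℝ) :=
    ((((hD.pow s).div (hI.pow s) (by positivity)).const_add 1).comp
      tendsto_fst_uniformGridLimit).isBigO_one ℝ
  have hproduct := hratio.mul (indicator_add_div_isBigO hD hDpos hk)
  simp only [one_mul] at hproduct
  refine IsBigO.trans (IsBigO.of_bound' ?_) hproduct
  filter_upwards [eventually_snd_pos, eventually_wenoD_pow_pos hD hDpos s,
    (hI.comp tendsto_fst_uniformGridLimit).eventually_const_lt hIpos] with p hε hDp hIp
  rw [Real.norm_of_nonneg (wenoOmega_nonneg hε i)]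
  exact (wenoOmega_le hε hkR (pow_pos hIp s) hDp).trans (Real.le_norm_self _)

lemma wenoOmega_isBigO_one (c : ℕ → ℝ) (z : ℝ) (f : ℝ → ℝ) (s : ℕ)
    (hi : i ∈ Finset.range (R / 2 + 1)) :
    (fun p : ℝ × ℝ => wenoOmega R c z f s p.2 i p.1) =O[uniformGridLimit] fun _ => (1 : ℝ) := by
  refine IsBigO.of_bound' ?_
  filter_upwards [eventually_snd_pos] with p hε
  rw [Real.norm_of_nonneg (wenoOmega_nonneg hε i), norm_one]
  exact wenoOmega_le_one hε hi

lemma wenoQ_sub_isBigO {cstar : ℝ} {g : ℝ × ℝ → ℝ}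
    (hfull : (fun p : ℝ × ℝ => wenoOmegaG R c z f s p.2 p.1 *
      (wenoPfull R c z cstar f p.1 - f (z + cstar * p.1))) =O[uniformGridLimit] g)
    (hsub : ∀ i ∈ Finset.range (R / 2 + 1), (fun p : ℝ × ℝ => wenoOmega R c z f s p.2 i p.1 *
      (wenoP R c z cstar f i p.1 - f (z + cstar * p.1))) =O[uniformGridLimit] g) :
    (fun p : ℝ × ℝ => wenoQ R c z cstar f s p.2 p.1 - f (z + cstar * p.1))
      =O[uniformGridLimit] g := by
  have hone_sub : (fun p : ℝ × ℝ => 1 - wenoOmegaG R c z f s p.2 p.1) =O[uniformGridLimit]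
      fun _ => (1 : ℝ) := by
    refine IsBigO.of_bound' ?_
    filter_upwards [eventually_snd_pos] with p hε
    obtain ⟨hnonneg, hle⟩ := wenoOmegaG_mem_Icc (R := R) (c := c) (z := z) (f := f) (s := s)
      (h := p.1) hε
    rw [Real.norm_of_nonneg (sub_nonneg.2 hle), norm_one]
    exact sub_le_self 1 hnonneg
  have hsum := hone_sub.mul (IsBigO.fun_sum hsub)
  simp only [one_mul] at hsum
  refine (hfull.add hsum).congr' ?_ EventuallyEq.rfl
  filter_upwards [eventually_snd_pos] with p hε
  exact (wenoQ_sub hε _).symm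

end UniformGridLimit

section Jump

variable {R i l k s m : ℕ} {c : ℕ → ℝ} {z cstar a D : ℝ} {f : ℝ → ℝ}

lemma neg_iff_le_of_strictMonoOn (hc : StrictMonoOn c (Iio R)) (hl : l + 1 < R) (hcl : c l < 0)
    (hcl' : 0 ≤ c (l + 1)) (hi : i < R) : c i < 0 ↔ i ≤ l := by
  refine ⟨fun hneg => ?_, fun hil => (hc.monotoneOn hi (by grind) hil).trans_lt hcl⟩
  by_contra! hli
  exact hneg.not_ge (hcl'.trans (hc.monotoneOn (mem_Iio.2 hl) hi hli))

lemma interpolate_sub_isBigO_one (S : Finset ℕ) (c : ℕ → ℝ) (x : ℝ)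
    (hleft : Tendsto f (𝓝[<] z) (𝓝 a)) (hright : ContinuousWithinAt f (Ici z) z) :
    (fun h => (Lagrange.interpolate S c fun j => f (z + c j * h)).eval x - f (z + x * h))
      =O[𝓝[>] 0] fun _ => (1 : ℝ) :=
  (isBigO_eval_interpolate fun j _ => (tendsto_sample hleft hright (c j)).isBigO_one ℝ).sub
    ((tendsto_sample hleft hright x).isBigO_one ℝ)

lemma wenoI_pow_isBigO (hc : ∀ j ∈ Finset.Icc i (i + (R - 1) / 2), 0 ≤ c j)
    (hf : DifferentiableWithinAt ℝ f (Ici z) z) (hms : m ≤ 2 * s) :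
    (fun h => wenoI R c z f i h ^ s) =O[𝓝[>] 0] fun h => h ^ m := by
  have hpow := (wenoI_isBigO_sq hc hf).pow s
  simp only [← pow_mul] at hpow
  refine hpow.trans (IsBigO.mono ?_ nhdsWithin_le_nhds)
  rcases hms.eq_or_lt with rfl | hlt
  · exact isBigO_refl _ _
  · exact (isLittleO_pow_pow hlt).isBigO

lemma wenoOmegaG_mul_sub_isBigO (cstar : ℝ) (hD : Tendsto (wenoD R c z f) (𝓝[>] 0) (𝓝 D))
    (hDpos : 0 < D) (hkR : k ∈ Finset.range (R / 2 + 1))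
    (hk : (fun h => wenoI R c z f k h ^ s) =O[𝓝[>] 0] fun h => h ^ m)
    (hleft : Tendsto f (𝓝[<] z) (𝓝 a)) (hright : ContinuousWithinAt f (Ici z) z) :
    (fun p : ℝ × ℝ => wenoOmegaG R c z f s p.2 p.1 *
      (wenoPfull R c z cstar f p.1 - f (z + cstar * p.1))) =O[uniformGridLimit]
        fun p => p.1 ^ m + p.2 := by
  simp only [wenoPfull_eq_eval_interpolate]
  simpa only [Function.comp_def, mul_one] using (wenoOmegaG_isBigO hD hDpos hkR hk).mul
    ((interpolate_sub_isBigO_one (Finset.range R) c cstar hleft hright).comp_tendsto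
      tendsto_fst_uniformGridLimit)

lemma wenoOmega_mul_sub_isBigO_of_crossing (cstar : ℝ)
    (hD : Tendsto (wenoD R c z f) (𝓝[>] 0) (𝓝 D))
    (hDpos : 0 < D) (hkR : k ∈ Finset.range (R / 2 + 1))
    (hk : (fun h => wenoI R c z f k h ^ s) =O[𝓝[>] 0] fun h => h ^ m)
    (hleft : Tendsto f (𝓝[<] z) (𝓝 a)) (hright : ContinuousWithinAt f (Ici z) z)
    (hjump : a ≠ f z) (hl : l ∈ Finset.Ico i (i + (R - 1) / 2)) (hcl : c l < 0)
    (hcl' : 0 ≤ c (l + 1)) :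
    (fun p : ℝ × ℝ => wenoOmega R c z f s p.2 i p.1 *
      (wenoP R c z cstar f i p.1 - f (z + cstar * p.1))) =O[uniformGridLimit]
        fun p => p.1 ^ m + p.2 := by
  obtain ⟨I, hIpos, hI⟩ := exists_pos_tendsto_wenoI hleft hright hjump hl hcl hcl'
  simp only [wenoP_eq_eval_interpolate]
  simpa only [Function.comp_def, mul_one] using
    (wenoOmega_isBigO_of_tendsto_wenoI_pos hD hDpos hI hIpos hkR hk).mul
      ((interpolate_sub_isBigO_one (Finset.Icc i (i + (R - 1) / 2)) c cstar hleft
        hright).comp_tendsto tendsto_fst_uniformGridLimit)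

lemma wenoOmega_mul_sub_isBigO_of_clean (s : ℕ)
    (hinj : InjOn c (Finset.Icc i (i + (R - 1) / 2)))
    (hnonneg : ∀ j ∈ Finset.Icc i (i + (R - 1) / 2), 0 ≤ c j) (hcstar : 0 ≤ cstar)
    (hf : ContDiffWithinAt ℝ (((R - 1) / 2 : ℕ) + 1) f (Ici z) z)
    (hi : i ∈ Finset.range (R / 2 + 1)) :
    (fun p : ℝ × ℝ => wenoOmega R c z f s p.2 i p.1 *
      (wenoP R c z cstar f i p.1 - f (z + cstar * p.1))) =O[uniformGridLimit]
        fun p => p.1 ^ ((R - 1) / 2 + 1) + p.2 := by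
  have hinterp := eval_interpolate_sub_isBigO hinj hnonneg hcstar hf (by rw [Nat.card_Icc]; omega)
  have hmul := (wenoOmega_isBigO_one c z f s hi).mul
    (hinterp.comp_tendsto tendsto_fst_uniformGridLimit)
  simp only [one_mul] at hmul
  simp only [wenoP_eq_eval_interpolate]
  exact hmul.trans (fst_pow_isBigO_add _)

end Jump

theorem stmt_13_general {R : ℕ} {c : ℕ → ℝ} (hc : StrictMonoOn c (Iio R)) {z cstar : ℝ}
    (hcstar : 0 ≤ cstar) {f : ℝ → ℝ}
    (hf : ContDiffWithinAt ℝ (((R - 1) / 2 : ℕ) + 1) f (Ici z) z)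
    {a : ℝ} (hleft : Tendsto f (𝓝[<] z) (𝓝 a)) (hjump : a ≠ f z)
    {l : ℕ} (hcl : c l < 0) (hcl' : 0 ≤ c (l + 1)) (hlr : l < (R - 1) / 2)
    (hκ : ∑ i ∈ Finset.Ico (l + 1) R,
      1 / ∏ j ∈ (Finset.range R).erase i, (c i - c j) ≠ 0)
    {s : ℕ} (hs : (R - 1) / 2 + 1 ≤ 2 * s) :
    ∃ C > (0 : ℝ), ∃ h₀ > (0 : ℝ), ∀ ε : ℝ, 0 < ε → ∀ h : ℝ, 0 < h → h < h₀ →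
      |wenoQ R c z cstar f s ε h - f (z + cstar * h)| ≤ C * (h ^ ((R - 1) / 2 + 1) + ε) := by
  have hsign {i : ℕ} (hi : i < R) : c i < 0 ↔ i ≤ l :=
    neg_iff_le_of_strictMonoOn hc (by omega) hcl hcl' hi
  have hclean {i : ℕ} (hi : i ∈ Finset.range (R / 2 + 1)) (hli : l < i) :
      ∀ j ∈ Finset.Icc i (i + (R - 1) / 2), 0 ≤ c j := by
    intro j hj
    rw [Finset.mem_range] at hi
    rw [Finset.mem_Icc] at hj
    exact not_lt.1 fun hneg => absurd ((hsign (by omega)).1 hneg) (by omega)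
  have hlast : R / 2 ∈ Finset.range (R / 2 + 1) := Finset.self_mem_range_succ _
  have hfilter : Finset.Ico (l + 1) R = {i ∈ Finset.range R | ¬ c i < 0} := by
    ext i
    grind
  rw [hfilter] at hκ
  have hright := hf.continuousWithinAt
  obtain ⟨D, hDpos, hD⟩ := exists_pos_tendsto_wenoD (by simpa using hc.injOn) (by omega)
    hleft hright hjump hκ
  have hlastI : (fun h => wenoI R c z f (R / 2) h ^ s) =O[𝓝[>] 0] fun h => h ^ ((R - 1) / 2 + 1) :=
    wenoI_pow_isBigO (hclean hlast (by omega)) (hf.differentiableWithinAt (by simp)) hs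
  obtain ⟨C, hC, h₀, hh₀, hbound⟩ := exists_bound_of_isBigO_uniformGridLimit <|
    wenoQ_sub_isBigO (wenoOmegaG_mul_sub_isBigO cstar hD hDpos hlast hlastI hleft hright)
    fun i hi => by
      rcases le_or_gt i l with hil | hli
      · exact wenoOmega_mul_sub_isBigO_of_crossing cstar hD hDpos hlast hlastI hleft hright hjump
          (Finset.mem_Ico.2 ⟨hil, by omega⟩) hcl hcl'
      · exact wenoOmega_mul_sub_isBigO_of_clean s (hc.injOn.mono (by grind)) (hclean hi hli)
          hcstar hf hi
  refine ⟨C, hC, h₀, hh₀, fun ε hε h hpos hlt => ?_⟩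
  rw [← abs_of_pos (by positivity : 0 < h ^ ((R - 1) / 2 + 1) + ε)]
  exact hbound ε hε h hpos hlt

section PiecewiseData

variable {fL fR f : ℝ → ℝ} {z : ℝ}

lemma contDiffWithinAt_Ici_of_piecewise {n : WithTop ℕ∞}
    (hf : ∀ x, f x = if x < z then fL x else fR x)
    (hfR : ContDiffAt ℝ n fR z) : ContDiffWithinAt ℝ n f (Ici z) z :=
  hfR.contDiffWithinAt.congr (fun x hx => by rw [hf, if_neg (not_lt.2 hx)])
    (by rw [hf, if_neg (lt_irrefl z)])

lemma tendsto_nhdsLT_of_piecewise (hf : ∀ x, f x = if x < z then fL x else fR x)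
    (hfL : ContinuousAt fL z) : Tendsto f (𝓝[<] z) (𝓝 (fL z)) :=
  (hfL.tendsto.mono_left nhdsWithin_le_nhds).congr' <| by
    filter_upwards [self_mem_nhdsWithin] with x hx
    rw [hf, if_pos (mem_Iio.1 hx)]

end PiecewiseData

/-- **Essentially non-oscillatory property at a jump.** In the jump setting, if every clean
substencil lies to the right of `z` (`l ≤ r-1`), `c* > 0`, `κ ≠ 0` and `2s ≥ r+1`, then
`q_{R,h}(x*_h) = f(x*_h) + O(h^{r+1}) + O(ε)` for `0 < ε ≤ 1` and small `h`. -/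
theorem stmt_13 (R : ℕ) (hR : 3 ≤ R) (c : ℕ → ℝ)
    (hc : ∀ i j : ℕ, i < j → j < R → c i < c j)
    (z cstar : ℝ) (hcstar : 0 < cstar)
    (fL fR f : ℝ → ℝ) (U : Set ℝ) (hU : U ∈ nhds z)
    (hfL : ContDiffOn ℝ (⊤ : ℕ∞) fL U) (hfR : ContDiffOn ℝ (⊤ : ℕ∞) fR U)
    (hjump : fL z ≠ fR z)
    (hf : ∀ x : ℝ, f x = if x < z then fL x else fR x)
    (l : ℕ) (hl : l + 1 < R) (hcl : c l < 0) (hcl' : 0 ≤ c (l + 1))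
    (hlr : l ≤ (R - 1) / 2 - 1)
    (hκ : ∑ i ∈ Finset.Ico (l + 1) R,
        1 / ∏ j ∈ (Finset.range R).erase i, (c i - c j) ≠ 0)
    (s : ℕ) (hs : (R - 1) / 2 + 1 ≤ 2 * s) :
    ∃ C > (0 : ℝ), ∃ h₀ > (0 : ℝ), ∀ ε : ℝ, 0 < ε → ε ≤ 1 → ∀ h : ℝ, 0 < h → h < h₀ →
      |wenoQ R c z cstar f s ε h - f (z + cstar * h)|
        ≤ C * (h ^ ((R - 1) / 2 + 1) + ε) := by
  have hjump' : fL z ≠ f z := by rwa [hf z, if_neg (lt_irrefl z)]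
  have hright : ContDiffWithinAt ℝ (((R - 1) / 2 : ℕ) + 1) f (Ici z) z :=
    contDiffWithinAt_Ici_of_piecewise hf ((hfR.contDiffAt hU).of_le (mod_cast le_top))
  have hleft := tendsto_nhdsLT_of_piecewise hf (hfL.continuousOn.continuousAt hU)
  obtain ⟨C, hC, h₀, hh₀, hbound⟩ := stmt_13_general (fun i _ j hj hij => hc i j hij hj)
    hcstar.le hright hleft hjump' hcl hcl' (by omega) hκ hs
  exact ⟨C, hC, h₀, hh₀, fun ε hε _ => hbound ε hε⟩
end

section
/- Assume the jump setting for the full stencil: f_L and f_R are C^∞ (continuity suffices) on a neighborhood of z with f_L(z) ≠ f_R(z), f(x) = f_L(x) for x < z and f(x) = f_R(x) for x ≥ z, and c_l < 0 ≤ c_{l+1} for some index l with 0 ≤ l ≤ R−2. Then lim_{h→0⁺} Σ_{i=0}^{R−1} f(z + c_i·h)/Π_{j≠i}(c_i − c_j) = (f_R(z) − f_L(z))·κ, where κ = Σ_{i=l+1}^{R−1} 1/Π_{j≠i}(c_i − c_j); consequently, if κ ≠ 0 then d_{R,h} = ((R−1)!·Σ_{i=0}^{R−1} f(z + c_i·h)/Π_{j≠i}(c_i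 − c_j))² converges to the strictly positive limit ((R−1)!·(f_R(z) − f_L(z))·κ)². -/
/-!
As `h → 0⁺`, the nodes `z + c i * h` with `c i < 0` see the left limit `a` of `f` at `z`, and the
others see the right limit `b`. Writing the limiting data as the constant `a` plus the jump `b - a`
on the nodes with `0 ≤ c i`, the constant drops out because a divided difference on at least two
nodes annihilates constants.
-/

section

open Filter Finset Topology

theorem sum_one_div_prod_sub_eq_zero {F ι : Type*} [Field F] [DecidableEq ι] {s : Finset ι}
    {c : ι → F} (hs : s.Nontrivial) (hc : Set.InjOn c s) :
    ∑ i ∈ s, 1 / ∏ j ∈ s.erase i, (c i - c j) = 0 := by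
  have hcard : 1 < #s := one_lt_card_iff_nontrivial.mpr hs
  have hdeg : (1 : Polynomial F).degree < #s := by
    rw [Polynomial.degree_one]
    exact_mod_cast zero_lt_one.trans hcard
  have hcoeff : (1 : Polynomial F).coeff (#s - 1) = 0 := by
    rw [Polynomial.coeff_one, if_neg (by lia)]
  simpa only [hcoeff, Polynomial.eval_one, eq_comm] using Lagrange.coeff_eq_sum hc hdeg

theorem sum_smul_ite_of_sum_eq_zero {R E ι : Type*} [Ring R] [AddCommGroup E] [Module R E]
    {s : Finset ι} {w : ι → R} (hw : ∑ i ∈ s, w i = 0) (p : ι → Prop) [DecidablePred p] (a b : E) :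
    ∑ i ∈ s, w i • (if p i then b else a) = (∑ i ∈ s with p i, w i) • (b - a) := by
  have hsplit (i : ι) : w i • (if p i then b else a) =
      w i • a + (if p i then w i else 0) • (b - a) := by
    split_ifs <;> simp [smul_sub]
  simp only [hsplit, sum_add_distrib, ← sum_smul, hw, zero_smul, zero_add, ← sum_filter]

theorem tendsto_nhdsWithin_of_eqOn {X Y : Type*} [TopologicalSpace X] [TopologicalSpace Y]
    {f g : X → Y} {S : Set X} {z : X} (hg : ContinuousWithinAt g S z) (hfg : Set.EqOn f g S) :
    Tendsto f (𝓝[S] z) (𝓝 (g z)) :=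
  hg.tendsto.congr' hfg.symm.eventuallyEq_nhdsWithin

theorem filter_le_range_eq_Ico {α : Type*} [Preorder α] [DecidableLE α] {n l : ℕ} {c : ℕ → α}
    {x : α} (hc : MonotoneOn c (range n)) (hl : l < n) (hlx : c l < x) (hxl : x ≤ c (l + 1)) :
    {i ∈ range n | x ≤ c i} = Ico (l + 1) n := by
  simp only [MonotoneOn, coe_range, Set.mem_Iio] at hc
  ext i
  simp only [mem_filter, mem_range, mem_Ico, and_comm (b := i < n), and_congr_right_iff]
  intro hi
  refine ⟨fun hxi => ?_, fun hli => hxl.trans (hc (by lia) hi hli)⟩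
  by_contra! hil
  exact ((hc hi hl (by lia)).trans_lt hlx).not_ge hxi

variable {𝕜 ι : Type*} [Field 𝕜] [LinearOrder 𝕜] [IsStrictOrderedRing 𝕜] [TopologicalSpace 𝕜]
  [OrderTopology 𝕜]

theorem tendsto_add_const_mul_nhdsGT_zero (z c : 𝕜) :
    Tendsto (fun h => z + c * h) (𝓝[>] 0) (𝓝 z) :=
  tendsto_nhdsWithin_of_tendsto_nhds
    (Continuous.tendsto' (by fun_prop) 0 z (by rw [mul_zero, add_zero]))

theorem tendsto_add_const_mul_nhdsLT_of_neg (z : 𝕜) {c : 𝕜} (hc : c < 0) :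
    Tendsto (fun h => z + c * h) (𝓝[>] 0) (𝓝[<] z) := by
  refine tendsto_nhdsWithin_iff.mpr ⟨tendsto_add_const_mul_nhdsGT_zero z c, ?_⟩
  filter_upwards [self_mem_nhdsWithin] with h hh
  exact add_lt_of_neg_right z (mul_neg_of_neg_of_pos hc hh)

theorem tendsto_add_const_mul_nhdsGE_of_nonneg (z : 𝕜) {c : 𝕜} (hc : 0 ≤ c) :
    Tendsto (fun h => z + c * h) (𝓝[>] 0) (𝓝[≥] z) := by
  refine tendsto_nhdsWithin_iff.mpr ⟨tendsto_add_const_mul_nhdsGT_zero z c, ?_⟩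
  filter_upwards [self_mem_nhdsWithin] with h hh
  exact le_add_of_nonneg_right (mul_nonneg hc hh.le)

theorem tendsto_sum_smul_of_sum_eq_zero {E : Type*} [AddCommGroup E] [Module 𝕜 E]
    [TopologicalSpace E] [ContinuousAdd E] [ContinuousConstSMul 𝕜 E] {s : Finset ι} {w : ι → 𝕜}
    (hw : ∑ i ∈ s, w i = 0) (c : ι → 𝕜) {f : 𝕜 → E} {z : 𝕜} {a b : E}
    (ha : Tendsto f (𝓝[<] z) (𝓝 a)) (hb : Tendsto f (𝓝[≥] z) (𝓝 b)) :
    Tendsto (fun h => ∑ i ∈ s, w i • f (z + c i * h)) (𝓝[>] 0)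
      (𝓝 ((∑ i ∈ s with 0 ≤ c i, w i) • (b - a))) := by
  rw [← sum_smul_ite_of_sum_eq_zero hw]
  refine tendsto_finsetSum s fun i _ => Tendsto.const_smul ?_ (w i)
  split_ifs with hi
  · exact hb.comp (tendsto_add_const_mul_nhdsGE_of_nonneg z hi)
  · exact ha.comp (tendsto_add_const_mul_nhdsLT_of_neg z (not_le.mp hi))

theorem tendsto_sum_div_prod_sub [DecidableEq ι] {s : Finset ι} {c : ι → 𝕜} (hs : s.Nontrivial)
    (hc : Set.InjOn c s) {f : 𝕜 → 𝕜} {z a b : 𝕜} (ha : Tendsto f (𝓝[<] z) (𝓝 a))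
    (hb : Tendsto f (𝓝[≥] z) (𝓝 b)) :
    Tendsto (fun h => ∑ i ∈ s, f (z + c i * h) / ∏ j ∈ s.erase i, (c i - c j)) (𝓝[>] 0)
      (𝓝 ((b - a) * ∑ i ∈ s with 0 ≤ c i, 1 / ∏ j ∈ s.erase i, (c i - c j))) := by
  simpa only [smul_eq_mul, one_div_mul_eq_div, mul_comm (b - a)] using
    tendsto_sum_smul_of_sum_eq_zero (sum_one_div_prod_sub_eq_zero hs hc) c ha hb

theorem stmt_15_general [DecidableEq ι] {s : Finset ι} {c : ι → 𝕜} (hs : s.Nontrivial)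
    (hc : Set.InjOn c s) {f : 𝕜 → 𝕜} {z a b : 𝕜} (ha : Tendsto f (𝓝[<] z) (𝓝 a))
    (hb : Tendsto f (𝓝[≥] z) (𝓝 b)) (hab : a ≠ b) {κ : 𝕜}
    (hκ : κ = ∑ i ∈ s with 0 ≤ c i, 1 / ∏ j ∈ s.erase i, (c i - c j)) :
    Tendsto (fun h => ∑ i ∈ s, f (z + c i * h) / ∏ j ∈ s.erase i, (c i - c j)) (𝓝[>] 0)
      (𝓝 ((b - a) * κ)) ∧
    (κ ≠ 0 →
      0 < (((#s - 1).factorial : 𝕜) * (b - a) * κ) ^ 2 ∧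
        Tendsto
          (fun h => (((#s - 1).factorial : 𝕜) *
            ∑ i ∈ s, f (z + c i * h) / ∏ j ∈ s.erase i, (c i - c j)) ^ 2)
          (𝓝[>] 0) (𝓝 ((((#s - 1).factorial : 𝕜) * (b - a) * κ) ^ 2))) := by
  have hlim := hκ ▸ tendsto_sum_div_prod_sub hs hc ha hb
  refine ⟨hlim, fun hκ0 => ⟨?_, ?_⟩⟩
  · have hfact : ((#s - 1).factorial : 𝕜) ≠ 0 := Nat.cast_ne_zero.mpr (Nat.factorial_ne_zero _)
    exact sq_pos_of_ne_zero (mul_ne_zero (mul_ne_zero hfact (sub_ne_zero.mpr hab.symm)) hκ0)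
  · rw [mul_assoc]
    exact (hlim.const_mul _).pow 2

end

/-- **Undivided difference at a jump.** If the full stencil crosses a jump of `f` at `z`
(`c_l < 0 ≤ c_{l+1}`), then `Σᵢ f(z + cᵢ h)/Πⱼ≠ᵢ(cᵢ-cⱼ) → (f_R(z) - f_L(z))·κ` as `h → 0⁺`,
where `κ = Σ_{i=l+1}^{R-1} 1/Πⱼ≠ᵢ(cᵢ-cⱼ)`; hence if `κ ≠ 0`, the squared undivided difference
`d_{R,h}` converges to the strictly positive limit `((R-1)!·(f_R(z)-f_L(z))·κ)²`. -/
theorem stmt_15 (R : ℕ) (hR : 2 ≤ R) (c : ℕ → ℝ)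
    (hc : ∀ i j : ℕ, i < j → j < R → c i < c j)
    (z : ℝ) (fL fR f : ℝ → ℝ) (U : Set ℝ) (hU : U ∈ nhds z)
    (hfL : ContinuousOn fL U) (hfR : ContinuousOn fR U)
    (hjump : fL z ≠ fR z)
    (hf : ∀ x : ℝ, f x = if x < z then fL x else fR x)
    (l : ℕ) (hl : l ≤ R - 2) (hcl : c l < 0) (hcl' : 0 ≤ c (l + 1))
    (κ : ℝ)
    (hκdef : κ = ∑ i ∈ Finset.Ico (l + 1) R,
        1 / ∏ j ∈ (Finset.range R).erase i, (c i - c j)) :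
    Filter.Tendsto
      (fun h : ℝ =>
        ∑ i ∈ Finset.range R,
          f (z + c i * h) / ∏ j ∈ (Finset.range R).erase i, (c i - c j))
      (nhdsWithin 0 (Set.Ioi 0)) (nhds ((fR z - fL z) * κ)) ∧
    (κ ≠ 0 →
      0 < (((R - 1).factorial : ℝ) * (fR z - fL z) * κ) ^ 2 ∧
        Filter.Tendsto
          (fun h : ℝ =>
            (((R - 1).factorial : ℝ) *
                ∑ i ∈ Finset.range R,
                  f (z + c i * h) / ∏ j ∈ (Finset.range R).erase i, (c i - c j)) ^ 2)
          (nhdsWithin 0 (Set.Ioi 0))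
          (nhds ((((R - 1).factorial : ℝ) * (fR z - fL z) * κ) ^ 2))) := by
  have hs : (Finset.range R).Nontrivial :=
    Finset.one_lt_card_iff_nontrivial.mp (hR.trans_eq (Finset.card_range R).symm)
  have hmono : StrictMonoOn c (Finset.range R) := fun i _ j hj hij =>
    hc i j hij (Finset.mem_range.mp hj)
  have hleft := tendsto_nhdsWithin_of_eqOn (hfL.continuousAt hU).continuousWithinAt
    fun x (hx : x < z) => (hf x).trans (if_pos hx)
  have hright := tendsto_nhdsWithin_of_eqOn (hfR.continuousAt hU).continuousWithinAt
    fun x (hx : z ≤ x) => (hf x).trans (if_neg hx.not_gt)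
  rw [← filter_le_range_eq_Ico hmono.monotoneOn (by lia) hcl hcl'] at hκdef
  simpa only [Finset.card_range] using stmt_15_general hs hmono.injOn hleft hright hjump hκdef
end

section
/- For every t ∈ ℝ, ∫_0^{2π} 2e^t/((1 − cos x) + (1 + cos x)·e^{2t}) dx = 2π. -/
/-!
With `R = 1 + eᵗ` and `r = 1 - eᵗ` the integrand is `(R² - r²) / (R² - 2Rr cos x + r²)`, the Poisson
kernel of a disk of radius `R` at a point at distance `|r| < R` from its centre. Its average over
the boundary circle is `1`, by the Poisson integral formula for the constant function `1`.
-/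

open Complex in
theorem norm_circleMap_zero_sub_circleMap_zero_sq (R r θ φ : ℝ) :
    ‖circleMap 0 R θ - circleMap 0 r φ‖ ^ 2 =
      R ^ 2 - 2 * R * r * Real.cos (θ - φ) + r ^ 2 := by
  simp only [Complex.sq_norm, normSq_apply, sub_re, sub_im, circleMap_zero_re, circleMap_zero_im,
    Real.cos_sub]
  linear_combination R ^ 2 * Real.sin_sq_add_cos_sq θ + r ^ 2 * Real.sin_sq_add_cos_sq φ

theorem poissonKernel_circleMap_circleMap (c : ℂ) (R r θ φ : ℝ) :
    poissonKernel c (circleMap c r φ) (circleMap c R θ) =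
      (R ^ 2 - r ^ 2) / (R ^ 2 - 2 * R * r * Real.cos (θ - φ) + r ^ 2) := by
  simp only [poissonKernel_def, circleMap_sub_center, norm_circleMap_zero, sq_abs,
    norm_circleMap_zero_sub_circleMap_zero_sq]

theorem circleAverage_poissonKernel {c w : ℂ} {R : ℝ} (hw : w ∈ Metric.ball c R) :
    Real.circleAverage (poissonKernel c w) c R = 1 := by
  have poisson_formula_one :=
    (InnerProductSpace.harmonicOnNhd_const (1 : ℝ)).circleAverage_poissonKernel_smul hw
  rwa [smul_eq_mul, ← Pi.one_def, mul_one] at poisson_formula_one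

theorem integral_poissonKernel_polar {R r : ℝ} (h : |r| < |R|) (φ : ℝ) :
    ∫ θ in (0 : ℝ)..(2 * Real.pi),
      (R ^ 2 - r ^ 2) / (R ^ 2 - 2 * R * r * Real.cos (θ - φ) + r ^ 2) = 2 * Real.pi := by
  have point_mem_ball : circleMap 0 r φ ∈ Metric.ball 0 |R| := by
    rwa [mem_ball_zero_iff, norm_circleMap_zero]
  have average_eq_one := circleAverage_poissonKernel point_mem_ball
  rw [Real.circleAverage_abs_radius, Real.circleAverage_def, smul_eq_mul,
    inv_mul_eq_one₀ Real.two_pi_pos.ne'] at average_eq_one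
  simpa only [poissonKernel_circleMap_circleMap] using average_eq_one.symm

/-- **Conservation of total mass:** for every `t`,
`∫₀^{2π} 2eᵗ/((1 - cos x) + (1 + cos x)e^{2t}) dx = 2π`. -/
theorem stmt_17 (t : ℝ) :
    ∫ x in (0 : ℝ)..(2 * Real.pi),
      2 * Real.exp t / ((1 - Real.cos x) + (1 + Real.cos x) * Real.exp (2 * t))
      = 2 * Real.pi := by
  have abs_radius_lt : |1 - Real.exp t| < |1 + Real.exp t| :=
    sq_lt_sq.mp (by linarith [Real.exp_pos t])
  have exp_two_mul : Real.exp (2 * t) = Real.exp t ^ 2 := mod_cast Real.exp_nat_mul t 2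
  have numerator_eq : (1 + Real.exp t) ^ 2 - (1 - Real.exp t) ^ 2 = 2 * (2 * Real.exp t) := by
    ring
  have denominator_eq (x : ℝ) :
      (1 + Real.exp t) ^ 2 - 2 * (1 + Real.exp t) * (1 - Real.exp t) * Real.cos (x - 0)
          + (1 - Real.exp t) ^ 2
        = 2 * ((1 - Real.cos x) + (1 + Real.cos x) * Real.exp (2 * t)) := by
    rw [exp_two_mul, sub_zero]
    ring
  simpa only [numerator_eq, denominator_eq, mul_div_mul_left _ _ (two_ne_zero' ℝ)] using
    integral_poissonKernel_polar abs_radius_lt 0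
end
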